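/- Assume k is a unique factorization domain and d₁ + d₂ ≥ 3. Then the ideal 𝔓 = T_𝔪(𝒟) ∩ A (the defining ideal of the discriminant scheme of the generic complete intersection curve of bidegree (d₁,d₂) in ℙ³) is a principal ideal of A generated by an irreducible element of A. -/

import Mathlib

set_option maxSynthPendingDepth 3

open MvPolynomial

/-- Index type for the coefficient indeterminates `U_{i,α}`, `i ∈ {1,2}`,
`α` an exponent vector in four variables with `|α| = d i`. -/
def CoefIdx (d : Fin 2 → ℕ) : Type :=
  Σ i : Fin 2, {α : Fin 4 →₀ ℕ // (α.sum fun _ e => e) = d i}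

/-- The universal ring of coefficients `A = k[U_{i,α}]`. -/
abbrev Aring (k : Type*) [CommRing k] (d : Fin 2 → ℕ) : Type _ :=
  MvPolynomial (CoefIdx d) k

/-- The polynomial ring `C = A[x₁,x₂,x₃,x₄]`. -/
abbrev Cring (k : Type*) [CommRing k] (d : Fin 2 → ℕ) : Type _ :=
  MvPolynomial (Fin 4) (Aring k d)

/-- The generic homogeneous polynomial `f_i = Σ_{|α| = d i} U_{i,α} x^α` of degree `d i`. -/
noncomputable def genF (k : Type*) [CommRing k] (d : Fin 2 → ℕ) (i : Fin 2) : Cring k d :=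
  ∑ α ∈ (Finset.finsuppAntidiag (Finset.univ : Finset (Fin 4)) (d i)).attach,
    monomial α.1 (X (⟨i, ⟨α.1, (Finset.mem_finsuppAntidiag'.mp α.2).1⟩⟩ : CoefIdx d))

/-- The 2-minors `J_{r,s} = ∂ᵣf₁·∂ₛf₂ − ∂ₛf₁·∂ᵣf₂` of the Jacobian matrix of `(f₁,f₂)`. -/
noncomputable def Jmin (k : Type*) [CommRing k] (d : Fin 2 → ℕ) (r s : Fin 4) : Cring k d :=
  pderiv r (genF k d 0) * pderiv s (genF k d 1) -
    pderiv s (genF k d 0) * pderiv r (genF k d 1)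

/-- The ideal `𝒟 = (f₁, f₂) + (J_{r,s} : r < s) ⊂ C`. -/
noncomputable def Dideal (k : Type*) [CommRing k] (d : Fin 2 → ℕ) : Ideal (Cring k d) :=
  Ideal.span ({genF k d 0, genF k d 1} ∪ {p | ∃ r s : Fin 4, r < s ∧ p = Jmin k d r s})

/-- The maximal graded ideal `𝔪 = (x₁,x₂,x₃,x₄) ⊂ C`. -/
noncomputable def mIdeal (k : Type*) [CommRing k] (d : Fin 2 → ℕ) : Ideal (Cring k d) :=
  Ideal.span (Set.range (X : Fin 4 → Cring k d))


theorem aux_principal {B : Type*} [CommRing B] [IsDomain B] [UniqueFactorizationMonoid B]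
    (q : Ideal (Polynomial B)) [hq : q.IsPrime] (h0 : q ≠ ⊥)
    (hB : ∀ b : B, Polynomial.C b ∈ q → b = 0) :
    ∃ P, Irreducible P ∧ q = Ideal.span {P} := by
  classical
  obtain ⟨P, hPq, hP⟩ := hq.exists_mem_prime_of_ne_bot h0
  refine ⟨P, hP.irreducible, le_antisymm ?_ ?_⟩
  swap
  · rw [Ideal.span_le]; simpa using hPq
  intro Q hQ
  rw [Ideal.mem_span_singleton]
  have hdeg : P.natDegree ≠ 0 := by
    intro h
    rw [Polynomial.eq_C_of_natDegree_eq_zero h] at hPq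
    have := hB _ hPq
    apply hP.ne_zero
    rw [Polynomial.eq_C_of_natDegree_eq_zero h, this, Polynomial.C_0]
  have hprim : P.IsPrimitive := hP.irreducible.isPrimitive hdeg
  let _ : NormalizedGCDMonoid B := Classical.choice inferInstance
  let K := FractionRing B
  have hirr : Irreducible (P.map (algebraMap B K)) :=
    (hprim.irreducible_iff_irreducible_map_fraction_map (K := K)).1 hP.irreducible
  rw [hprim.dvd_iff_fraction_map_dvd_fraction_map K]
  by_contra hnd
  obtain ⟨u, v, huv⟩ := hirr.coprime_iff_not_dvd.2 hnd
  obtain ⟨a, ha, hau⟩ := IsLocalization.integerNormalization_spec (nonZeroDivisors B) u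
  obtain ⟨b, hb, hbv⟩ := IsLocalization.integerNormalization_spec (nonZeroDivisors B) v
  set u' := IsLocalization.integerNormalization (nonZeroDivisors B) u
  set v' := IsLocalization.integerNormalization (nonZeroDivisors B) v
  have key : Polynomial.C b * u' * P + Polynomial.C a * v' * Q = Polynomial.C (a * b) := by
    apply Polynomial.map_injective (algebraMap B K) (IsFractionRing.injective B K)
    simp only [Polynomial.map_add, Polynomial.map_mul, Polynomial.map_C, hau, hbv, map_mul]
    rw [Algebra.smul_def, Algebra.smul_def, ← mul_one (Polynomial.C _ * Polynomial.C _), ← huv]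
    simp only [Polynomial.algebraMap_apply]
    have : ∀ x : B, Polynomial.C ((algebraMap B K) x) = algebraMap B (Polynomial K) x := fun x => rfl
    simp only [this]
    ring
  have hm : Polynomial.C (a * b) ∈ q := by
    rw [← key]
    exact q.add_mem (q.mul_mem_left _ hPq) (q.mul_mem_left _ hQ)
  have := hB _ hm
  exact nonZeroDivisors.ne_zero (mul_mem ha hb) this

theorem aux_inj {σ k : Type*} [CommRing k] (F : σ → MvPolynomial σ k)
    (hF : ∀ i, F i - MvPolynomial.X i ∈ MvPolynomial.idealOfVars σ k ^ 2) :
    Function.Injective (MvPolynomial.aeval F : MvPolynomial σ k →ₐ[k] MvPolynomial σ k) := by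
  set I := MvPolynomial.idealOfVars σ k with hI
  set f : MvPolynomial σ k →ₐ[k] MvPolynomial σ k := MvPolynomial.aeval F with hf
  have hX : ∀ i, MvPolynomial.X i ∈ I := fun i => Ideal.subset_span ⟨i, rfl⟩
  have h1 : ∀ c, f c - c ∈ I := by
    intro c
    rw [← Ideal.Quotient.eq]
    have : ((Ideal.Quotient.mkₐ k I).comp f) = Ideal.Quotient.mkₐ k I := by
      apply MvPolynomial.algHom_ext
      intro i
      simp only [AlgHom.comp_apply, Ideal.Quotient.mkₐ_eq_mk, hf, MvPolynomial.aeval_X]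
      rw [Ideal.Quotient.eq]
      exact Ideal.pow_le_self two_ne_zero (hF i)
    exact DFunLike.congr_fun this c
  have h2 : ∀ b ∈ I, f b - b ∈ I ^ 2 := by
    intro b hb
    refine Submodule.span_induction (p := fun b _ => f b - b ∈ I ^ 2) ?_ ?_ ?_ ?_ hb
    · rintro _ ⟨i, rfl⟩
      simpa [hf] using hF i
    · simp
    · intro x y _ _ hx hy
      have : f (x + y) - (x + y) = (f x - x) + (f y - y) := by rw [map_add]; ring
      rw [this]; exact (I ^ 2).add_mem hx hy
    · intro c x hx' hx
      have : f (c • x) - c • x = f c * (f x - x) + (f c - c) * x := by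
        rw [smul_eq_mul, map_mul]; ring
      rw [this]
      refine (I ^ 2).add_mem ((I ^ 2).mul_mem_left _ hx) ?_
      rw [pow_two]
      exact Ideal.mul_mem_mul (h1 c) hx'
  have h3 : ∀ n, ∀ a ∈ I ^ n, f a - a ∈ I ^ (n + 1) := by
    intro n
    induction n with
    | zero => intro a _; simpa using h1 a
    | succ n ih =>
      intro a ha
      rw [pow_succ] at ha
      refine Submodule.mul_induction_on ha ?_ ?_
      · intro x hx y hy
        have hfx : f x ∈ I ^ n := by
          have := (I ^ n).add_mem (Ideal.pow_le_pow_right (Nat.le_succ n) (ih x hx)) hx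
          simpa using this
        have : f (x * y) - x * y = f x * (f y - y) + (f x - x) * y := by
          rw [map_mul]; ring
        rw [this]
        refine Ideal.add_mem _ ?_ ?_
        · rw [show n + 1 + 1 = n + 2 from rfl, pow_add]
          exact Ideal.mul_mem_mul hfx (h2 y hy)
        · rw [pow_succ _ (n + 1)]
          exact Ideal.mul_mem_mul (ih x hx) hy
      · intro x y hx hy
        have : f (x + y) - (x + y) = (f x - x) + (f y - y) := by rw [map_add]; ring
        rw [this]; exact Ideal.add_mem _ hx hy
  rw [injective_iff_map_eq_zero]
  intro a ha
  have h4 : ∀ n, a ∈ I ^ n := by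
    intro n
    induction n with
    | zero => simp
    | succ n ih =>
      have := h3 n a ih
      rw [ha, zero_sub] at this
      simpa using this
  ext m
  have := (MvPolynomial.mem_pow_idealOfVars_iff' (m.degree + 1) a).1 (h4 _) m (Nat.lt_succ_self _)
  simpa using this

theorem aux_inj' {σ k : Type*} [CommRing k] (F : σ → MvPolynomial σ k) (c : σ → k)
    (hF : ∀ i, F i - MvPolynomial.X i - MvPolynomial.C (c i) ∈ MvPolynomial.idealOfVars σ k ^ 2) :
    Function.Injective (MvPolynomial.aeval F : MvPolynomial σ k →ₐ[k] MvPolynomial σ k) := by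
  have h := aux_inj (fun i => F i - MvPolynomial.C (c i)) (fun i => by
    have := hF i; rwa [sub_right_comm] at this)
  have h2 : (MvPolynomial.aeval F : MvPolynomial σ k →ₐ[k] MvPolynomial σ k) =
      (MvPolynomial.aeval (fun i => F i - MvPolynomial.C (c i))).comp
        (MvPolynomial.aeval (fun i => MvPolynomial.X i + MvPolynomial.C (c i))) := by
    apply MvPolynomial.algHom_ext
    intro i
    simp [MvPolynomial.algHom_C]
  rw [h2, AlgHom.coe_comp]
  refine h.comp ?_
  refine Function.LeftInverse.injective
    (g := MvPolynomial.aeval (fun i => MvPolynomial.X i - MvPolynomial.C (c i))) ?_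
  intro x
  rw [← AlgHom.comp_apply]
  conv_rhs => rw [← AlgHom.id_apply (R := k) x]
  congr 1
  apply MvPolynomial.algHom_ext
  intro i
  simp [MvPolynomial.algHom_C]

section Rees
variable {K ι : Type*} [CommRing K] [Fintype ι]

/-- The parametrisation of rank one matrices. -/
noncomputable def reesMap (K ι : Type*) [CommRing K] :
    MvPolynomial (ι ⊕ ι) K →ₐ[K] MvPolynomial (Option ι) K :=
  MvPolynomial.aeval (Sum.elim (fun r => MvPolynomial.X (some r))
    (fun r => MvPolynomial.X none * MvPolynomial.X (some r)))

noncomputable def reesIdeal (K ι : Type*) [CommRing K] : Ideal (MvPolynomial (ι ⊕ ι) K) :=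
  Ideal.span {p | ∃ r s : ι, p = MvPolynomial.X (Sum.inl r) * MvPolynomial.X (Sum.inr s)
    - MvPolynomial.X (Sum.inl s) * MvPolynomial.X (Sum.inr r)}

theorem rees_swap (n : ℕ) : ∀ (m m' : ι ⊕ ι →₀ ℕ),
    (∀ r, m (Sum.inl r) + m (Sum.inr r) = m' (Sum.inl r) + m' (Sum.inr r)) →
    (∑ r, m (Sum.inr r) = ∑ r, m' (Sum.inr r)) →
    (∑ r, (m (Sum.inr r) - m' (Sum.inr r)) = n) →
    (MvPolynomial.monomial m (1 : K) - MvPolynomial.monomial m' 1) ∈ reesIdeal K ι := by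
  classical
  induction n with
  | zero =>
    intro m m' h1 h2 h3
    have h4 : ∀ r, m (Sum.inr r) ≤ m' (Sum.inr r) := by
      intro r
      have := (Finset.sum_eq_zero_iff.1 h3) r (Finset.mem_univ _)
      omega
    have h5 : ∀ r, m (Sum.inr r) = m' (Sum.inr r) := by
      have := (Finset.sum_eq_sum_iff_of_le (fun i _ => h4 i)).1 h2
      exact fun r => this r (Finset.mem_univ _)
    have : m = m' := by
      ext (r | r)
      · have := h1 r; have := h5 r; omega
      · exact h5 r
    simp [this]
  | succ n ih =>
    intro m m' h1 h2 h3
    obtain ⟨s, hs⟩ : ∃ s, m' (Sum.inr s) < m (Sum.inr s) := by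
      by_contra hcon
      push Not at hcon
      have : ∑ r, (m (Sum.inr r) - m' (Sum.inr r)) = 0 :=
        Finset.sum_eq_zero (fun r _ => Nat.sub_eq_zero_of_le (hcon r))
      omega
    obtain ⟨r, hr⟩ : ∃ r, m (Sum.inr r) < m' (Sum.inr r) := by
      by_contra hcon
      push Not at hcon
      have := Finset.sum_lt_sum (fun i _ => hcon i) ⟨s, Finset.mem_univ _, hs⟩
      omega
    have hrs : r ≠ s := by rintro rfl; omega
    have hmr : 0 < m (Sum.inl r) := by have := h1 r; omega
    -- m = m0 + e_{inl r} + e_{inr s}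
    obtain ⟨m0, rfl⟩ : ∃ m0, m = m0 + Finsupp.single (Sum.inl r) 1 + Finsupp.single (Sum.inr s) 1 := by
      refine ⟨m - (Finsupp.single (Sum.inl r) 1 + Finsupp.single (Sum.inr s) 1), ?_⟩
      rw [add_assoc, tsub_add_cancel_of_le]
      intro x
      rcases x with x | x
      · simp only [Finsupp.add_apply, Finsupp.single_apply, Sum.inl.injEq, reduceCtorEq, if_false]
        split_ifs with h
        · subst h; omega
        · omega
      · simp only [Finsupp.add_apply, Finsupp.single_apply, Sum.inr.injEq, reduceCtorEq, if_false]
        split_ifs with h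
        · subst h; omega
        · omega
    set m1 := m0 + Finsupp.single (Sum.inl s) 1 + Finsupp.single (Sum.inr r) 1 with hm1
    simp only [Finsupp.add_apply, Finsupp.single_apply, Sum.inr.injEq, Sum.inl.injEq, reduceCtorEq,
      if_false, if_true, add_zero] at hs hr hmr h1 h2 h3
    simp only [if_neg hrs.symm] at hr
    have key : (MvPolynomial.monomial m1 (1 : K) - MvPolynomial.monomial m' 1) ∈ reesIdeal K ι := by
      apply ih
      · intro x
        simp only [hm1, Finsupp.add_apply, Finsupp.single_apply, Sum.inr.injEq, Sum.inl.injEq,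
          reduceCtorEq, if_false, add_zero]
        rw [← h1 x]
        omega
      · simp only [hm1, Finsupp.add_apply, Finsupp.single_apply, Sum.inr.injEq, Sum.inl.injEq,
          reduceCtorEq, if_false, add_zero]
        rw [← h2]
        simp [Finset.sum_add_distrib]
      · simp only [hm1, Finsupp.add_apply, Finsupp.single_apply, Sum.inr.injEq, Sum.inl.injEq,
          reduceCtorEq, if_false, add_zero]
        rw [← Finset.add_sum_erase _ _ (Finset.mem_univ s)] at h3 ⊢
        rw [if_neg hrs]
        rw [if_pos rfl] at h3
        have : ∑ x ∈ Finset.univ.erase s, (m0 (Sum.inr x) + (if r = x then 1 else 0) - m' (Sum.inr x))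
          = ∑ x ∈ Finset.univ.erase s, (m0 (Sum.inr x) + (if s = x then 1 else 0) - m' (Sum.inr x)) := by
          refine Finset.sum_congr rfl fun x hx => ?_
          have hxs : s ≠ x := (Finset.ne_of_mem_erase hx).symm
          rw [if_neg hxs]
          split_ifs with h
          · subst h; omega
          · rfl
        rw [this]
        omega
    have hsw : (MvPolynomial.monomial (m0 + Finsupp.single (Sum.inl r) 1 + Finsupp.single (Sum.inr s) 1) (1 : K)
        - MvPolynomial.monomial m1 1) ∈ reesIdeal K ι := by
      have : (MvPolynomial.monomial (m0 + Finsupp.single (Sum.inl r) 1 + Finsupp.single (Sum.inr s) 1) (1 : K)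
        - MvPolynomial.monomial m1 1) = MvPolynomial.monomial m0 1 *
          (MvPolynomial.X (Sum.inl r) * MvPolynomial.X (Sum.inr s)
    - MvPolynomial.X (Sum.inl s) * MvPolynomial.X (Sum.inr r)) := by
        simp only [hm1, MvPolynomial.X, mul_sub, MvPolynomial.monomial_mul, ← add_assoc, one_mul, mul_one]
      rw [this]
      exact Ideal.mul_mem_left _ _ (Ideal.subset_span ⟨r, s, rfl⟩)
    have := Ideal.add_mem _ hsw key
    simpa using this

noncomputable def reesW {ι : Type*} [Fintype ι] (m : ι ⊕ ι →₀ ℕ) : Option ι →₀ ℕ :=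
  Finsupp.equivFunOnFinite.symm
    (fun o => o.elim (∑ r, m (Sum.inr r)) (fun r => m (Sum.inl r) + m (Sum.inr r)))

theorem reesMap_monomial (m : ι ⊕ ι →₀ ℕ) :
    reesMap K ι (MvPolynomial.monomial m 1) = MvPolynomial.monomial (reesW m) 1 := by
  classical
  rw [reesMap, MvPolynomial.aeval_monomial, map_one, one_mul, MvPolynomial.monomial_eq, map_one,
    one_mul, Finsupp.prod_fintype _ _ (by simp), Finsupp.prod_fintype _ _ (by simp),
    Fintype.prod_sum_type, Fintype.prod_option]
  simp only [Sum.elim_inl, Sum.elim_inr, reesW, Finsupp.equivFunOnFinite_symm_apply_apply,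
    Option.elim_none, Option.elim_some, mul_pow, Finset.prod_mul_distrib, pow_add,
    Finset.prod_pow_eq_pow_sum]
  ring

theorem rees_ker (q : MvPolynomial (ι ⊕ ι) K) (hq : reesMap K ι q = 0) : q ∈ reesIdeal K ι := by
  classical
  let rep : (Option ι →₀ ℕ) → MvPolynomial (ι ⊕ ι) K ⧸ reesIdeal K ι := fun n =>
    if h : ∃ m, reesW (ι := ι) m = n then Ideal.Quotient.mk _ (MvPolynomial.monomial h.choose 1) else 0
  let lam : MvPolynomial (Option ι) K →ₗ[K] MvPolynomial (ι ⊕ ι) K ⧸ reesIdeal K ι :=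
    (MvPolynomial.basisMonomials (Option ι) K).constr K rep
  have key : lam ∘ₗ (reesMap K ι).toLinearMap = (Ideal.Quotient.mkₐ K (reesIdeal K ι)).toLinearMap := by
    apply (MvPolynomial.basisMonomials (ι ⊕ ι) K).ext
    intro m
    simp only [MvPolynomial.coe_basisMonomials, LinearMap.comp_apply, AlgHom.toLinearMap_apply]
    rw [reesMap_monomial]
    have : lam (MvPolynomial.monomial (reesW m) 1) = rep (reesW m) := by
      have := (MvPolynomial.basisMonomials (Option ι) K).constr_basis K rep (reesW m)
      simpa using this
    rw [this]
    have hex : ∃ m', reesW (ι := ι) m' = reesW m := ⟨m, rfl⟩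
    simp only [rep, dif_pos hex, Ideal.Quotient.mkₐ_eq_mk]
    rw [Ideal.Quotient.eq]
    have hs := hex.choose_spec
    refine rees_swap _ _ _ (fun r => ?_) ?_ rfl
    · simpa [reesW] using DFunLike.congr_fun hs (some r)
    · simpa [reesW] using DFunLike.congr_fun hs none
  have := LinearMap.congr_fun key q
  simp only [LinearMap.comp_apply, AlgHom.toLinearMap_apply, hq, map_zero] at this
  exact Ideal.Quotient.eq_zero_iff_mem.1 this.symm

end Rees

section Coef

variable {k : Type*} [CommRing k] {d : Fin 2 → ℕ} {t : Fin 4}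

/-- Coefficient indices of order at least two at the coordinate point `t`. -/
abbrev Hi (d : Fin 2 → ℕ) (t : Fin 4) : Type := {a : CoefIdx d // a.2.1 t + 2 ≤ d a.1}

theorem fs_sum (α : Fin 4 →₀ ℕ) : (α.sum fun _ e => e) = ∑ r, α r :=
  Finsupp.sum_fintype _ _ (by simp)

theorem lo_sum (hd : ∀ i, 0 < d i) (t : Fin 4) (i : Fin 2) (r : Fin 4) :
    ((Finsupp.single t (d i - 1) + Finsupp.single r 1 : Fin 4 →₀ ℕ).sum fun _ e => e) = d i := by
  rw [fs_sum]
  have := hd i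
  simp only [Finsupp.add_apply, Finset.sum_add_distrib, Finsupp.single_apply, Finset.sum_ite_eq,
    Finset.mem_univ, if_true]
  omega

/-- Coefficient indices of order at most one; `r = t` gives the constant coefficient. -/
noncomputable def lo (hd : ∀ i, 0 < d i) (t : Fin 4) (i : Fin 2) (r : Fin 4) : CoefIdx d :=
  ⟨i, ⟨Finsupp.single t (d i - 1) + Finsupp.single r 1, lo_sum hd t i r⟩⟩

theorem low_exists (n : ℕ) (hn : 0 < n) (t : Fin 4) (α : Fin 4 →₀ ℕ)
    (hα : (α.sum fun _ e => e) = n) (h : ¬ (α t + 2 ≤ n)) :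
    ∃ r, α = Finsupp.single t (n - 1) + Finsupp.single r 1 := by
  rw [fs_sum] at hα
  by_cases h1 : α t = n
  · refine ⟨t, ?_⟩
    rw [← Finsupp.single_add]
    ext x
    rw [Finsupp.single_apply]
    split_ifs with hx
    · subst hx; omega
    · have : α x + α t ≤ ∑ r, α r := by
        have := Finset.sum_le_sum_of_subset (f := α) (Finset.subset_univ {x, t})
        rwa [Finset.sum_pair (Ne.symm hx)] at this
      omega
  · obtain ⟨r, hrt, hr⟩ : ∃ r, r ≠ t ∧ α r ≠ 0 := by
      by_contra hcon
      push Not at hcon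
      rw [Finset.sum_eq_single t (fun r _ hr => hcon r hr) (by simp)] at hα
      exact h1 hα
    refine ⟨r, ?_⟩
    have h2 : α r + α t ≤ ∑ r, α r := by
      have := Finset.sum_le_sum_of_subset (f := α) (Finset.subset_univ {r, t})
      rwa [Finset.sum_pair hrt] at this
    ext x
    rw [Finsupp.add_apply, Finsupp.single_apply, Finsupp.single_apply]
    split_ifs with hx hx2 hx2
    · subst hx hx2; exact absurd rfl hrt
    · subst hx; omega
    · subst hx2; omega
    · have : α x + (α r + α t) ≤ ∑ r, α r := by
        have := Finset.sum_le_sum_of_subset (f := α) (Finset.subset_univ {x, r, t})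
        rwa [Finset.sum_insert (by simp [Ne.symm hx, Ne.symm hx2]), Finset.sum_pair hrt] at this
      omega

theorem lo_notHi (hd : ∀ i, 0 < d i) (t : Fin 4) (i : Fin 2) (r : Fin 4) :
    ¬ ((lo hd t i r).2.1 t + 2 ≤ d (lo hd t i r).1) := by
  have := hd i
  simp only [lo, Finsupp.add_apply, Finsupp.single_eq_same]
  omega

theorem lo_inj (hd : ∀ i, 0 < d i) (t : Fin 4) {i i' : Fin 2} {r r' : Fin 4}
    (h : lo hd t i r = lo hd t i' r') : i = i' ∧ r = r' := by
  have h1 : i = i' := congrArg Sigma.fst h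
  subst h1
  refine ⟨rfl, ?_⟩
  have h2 := eq_of_heq (Sigma.mk.inj h).2
  have h3 := congrArg Subtype.val h2
  simp only [add_right_inj] at h3
  exact Finsupp.single_left_injective one_ne_zero h3

theorem idx_bij (hd : ∀ i, 0 < d i) (t : Fin 4) :
    Function.Bijective (Sum.elim (Subtype.val : Hi d t → CoefIdx d)
      (fun x : Fin 2 × Fin 4 => lo hd t x.1 x.2)) := by
  constructor
  · rintro (a | a) (b | b) hab
    · exact congrArg Sum.inl (Subtype.ext hab)
    · simp only [Sum.elim_inl, Sum.elim_inr] at hab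
      exact absurd a.2 (by rw [hab]; exact lo_notHi hd t _ _)
    · simp only [Sum.elim_inl, Sum.elim_inr] at hab
      exact absurd b.2 (by rw [← hab]; exact lo_notHi hd t _ _)
    · simp only [Sum.elim_inr] at hab
      obtain ⟨h1, h2⟩ := lo_inj hd t hab
      exact congrArg Sum.inr (Prod.ext h1 h2)
  · rintro ⟨i, α, hα⟩
    by_cases h : α t + 2 ≤ d i
    · exact ⟨Sum.inl ⟨⟨i, α, hα⟩, h⟩, rfl⟩
    · obtain ⟨r, rfl⟩ := low_exists _ (hd i) t α hα h
      exact ⟨Sum.inr (i, r), rfl⟩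

/-- Splitting of the coefficient indices. -/
noncomputable def idxE (hd : ∀ i, 0 < d i) (t : Fin 4) : Hi d t ⊕ (Fin 2 × Fin 4) ≃ CoefIdx d :=
  Equiv.ofBijective _ (idx_bij hd t)

/-- The part of order at least two of a polynomial. -/
noncomputable def hG {S : Type*} [CommRing S] (u : Hi d t → S) (i : Fin 2) :
    MvPolynomial (Fin 4) S :=
  ∑ α ∈ (Finset.finsuppAntidiag (Finset.univ : Finset (Fin 4)) (d i)).attach,
    if h : α.1 t + 2 ≤ d i then
      monomial α.1 (u ⟨⟨i, ⟨α.1, (Finset.mem_finsuppAntidiag'.mp α.2).1⟩⟩, h⟩) else 0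

theorem map_hG {S S' : Type*} [CommRing S] [CommRing S'] (g : S →+* S') (u : Hi d t → S)
    (i : Fin 2) : MvPolynomial.map g (hG u i) = hG (fun a => g (u a)) i := by
  rw [hG, hG, map_sum]
  refine Finset.sum_congr rfl fun α _ => ?_
  split_ifs <;> simp [MvPolynomial.map_monomial]

theorem genF_eq (hd : ∀ i, 0 < d i) (t : Fin 4) (i : Fin 2) :
    genF k d i = hG (fun a : Hi d t => (X a.1 : Aring k d)) i +
      ∑ r, monomial (Finsupp.single t (d i - 1) + Finsupp.single r 1) (X (lo hd t i r)) := by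
  classical
  have h1 : genF k d i = hG (fun a : Hi d t => (X a.1 : Aring k d)) i +
      ∑ α ∈ (Finset.finsuppAntidiag (Finset.univ : Finset (Fin 4)) (d i)).attach,
        if ¬ (α.1 t + 2 ≤ d i) then
    monomial α.1 (X (⟨i, ⟨α.1, (Finset.mem_finsuppAntidiag'.mp α.2).1⟩⟩ : CoefIdx d)) else 0 := by
    rw [genF, hG]
    refine Eq.trans ?_ Finset.sum_add_distrib
    refine Finset.sum_congr rfl fun α _ => ?_
    by_cases h : α.1 t + 2 ≤ d i
    · simp only [h, dif_pos, not_true, if_false]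
      exact (add_zero _).symm
    · simp only [h, dif_neg, not_false_iff, if_true]
      exact (zero_add _).symm
  rw [h1]
  congr 1
  rw [← Finset.sum_filter]
  symm
  refine Finset.sum_bij (fun r _ => ⟨Finsupp.single t (d i - 1) + Finsupp.single r 1,
    Finset.mem_finsuppAntidiag'.mpr ⟨lo_sum hd t i r, by simp⟩⟩) ?_ ?_ ?_ ?_
  · intro r _
    simp only [Finset.mem_filter, Finset.mem_attach, true_and]
    exact lo_notHi hd t i r
  · intro r _ r' _ h
    have h3 := congrArg Subtype.val h
    simp only [add_right_inj] at h3
    exact Finsupp.single_left_injective one_ne_zero h3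
  · rintro ⟨α, hα⟩ h
    simp only [Finset.mem_filter, Finset.mem_attach, true_and] at h
    obtain ⟨r, hr⟩ := low_exists _ (hd i) t α (Finset.mem_finsuppAntidiag'.mp hα).1 h
    exact ⟨r, Finset.mem_univ _, Subtype.ext hr.symm⟩
  · intro r _
    rfl

theorem genF_homog (i : Fin 2) : (genF k d i).IsHomogeneous (d i) := by
  rw [genF]
  refine IsHomogeneous.sum _ _ _ fun α _ => ?_
  apply isHomogeneous_monomial
  have := (Finset.mem_finsuppAntidiag'.mp α.2).1
  exact this

section
variable {S : Type*} [CommRing S]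

theorem ev_mon (p : Fin 4 → S) (hp : p t = 1) (n : ℕ) (r : Fin 4) (c : S) :
    eval p (monomial (Finsupp.single t n + Finsupp.single r 1) c) = c * p r := by
  have : (monomial (Finsupp.single t n + Finsupp.single r 1) c : MvPolynomial (Fin 4) S)
      = C c * (X t ^ n * X r) := by
    rw [X_pow_eq_monomial, X, monomial_mul, C_mul_monomial]; simp
  rw [this]; simp [hp]

theorem ev_pd_mon (p : Fin 4 → S) (hp : p t = 1) (n : ℕ) (r s : Fin 4) (hs : s ≠ t) (c : S) :
    eval p (pderiv s (monomial (Finsupp.single t n + Finsupp.single r 1) c))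
      = if r = s then c else 0 := by
  have : (monomial (Finsupp.single t n + Finsupp.single r 1) c : MvPolynomial (Fin 4) S)
      = C c * (X t ^ n * X r) := by
    rw [X_pow_eq_monomial, X, monomial_mul, C_mul_monomial]; simp
  rw [this, pderiv_C_mul, pderiv_mul, pderiv_pow, pderiv_X_of_ne (Ne.symm hs)]
  by_cases h : r = s
  · subst h; simp [hp]
  · simp [pderiv_X_of_ne h, h]

theorem ev_genF (hd : ∀ i, 0 < d i) (g : Aring k d →+* S) (p : Fin 4 → S) (hp : p t = 1)
    (i : Fin 2) : eval₂Hom g p (genF k d i) =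
      eval p (hG (fun a : Hi d t => g (X a.1)) i) + ∑ r, g (X (lo hd t i r)) * p r := by
  rw [coe_eval₂Hom, ← eval_map, genF_eq hd t i, map_add, map_hG, map_add, map_sum, map_sum]
  congr 1
  refine Finset.sum_congr rfl fun r _ => ?_
  rw [map_monomial, ev_mon p hp]

theorem ev_pd_genF (hd : ∀ i, 0 < d i) (g : Aring k d →+* S) (p : Fin 4 → S) (hp : p t = 1)
    (i : Fin 2) (s : Fin 4) (hs : s ≠ t) : eval₂Hom g p (pderiv s (genF k d i)) =
      eval p (pderiv s (hG (fun a : Hi d t => g (X a.1)) i)) + g (X (lo hd t i s)) := by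
  rw [coe_eval₂Hom, ← eval_map, ← pderiv_map, genF_eq hd t i, map_add, map_hG, map_add, map_add,
    map_sum, map_sum, map_sum]
  congr 1
  simp only [map_monomial, ev_pd_mon p hp _ _ _ hs]
  simp

/-- Linear and constant coefficients recovered from the point and the differential. -/
noncomputable def lw (p : Fin 4 → S) (u : Hi d t → S) (v : Fin 2 → Fin 4 → S) (i : Fin 2)
    (r : Fin 4) : S :=
  if r = t then -(eval p (hG u i) +
    ∑ s ∈ Finset.univ.erase t, (v i s - eval p (pderiv s (hG u i))) * p s)
  else v i r - eval p (pderiv r (hG u i))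

noncomputable def coef (hd : ∀ i, 0 < d i) (p : Fin 4 → S) (u : Hi d t → S)
    (v : Fin 2 → Fin 4 → S) (a : CoefIdx d) : S :=
  Sum.elim u (fun x => lw p u v x.1 x.2) ((idxE hd t).symm a)

theorem coef_hi (hd : ∀ i, 0 < d i) (p : Fin 4 → S) (u : Hi d t → S)
    (v : Fin 2 → Fin 4 → S) (a : Hi d t) : coef hd p u v a.1 = u a := by
  have : (idxE hd t).symm a.1 = Sum.inl a := by
    rw [Equiv.symm_apply_eq]; rfl
  rw [coef, this]; rfl

theorem coef_lo (hd : ∀ i, 0 < d i) (p : Fin 4 → S) (u : Hi d t → S)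
    (v : Fin 2 → Fin 4 → S) (i : Fin 2) (r : Fin 4) : coef hd p u v (lo hd t i r) = lw p u v i r := by
  have : (idxE hd t).symm (lo hd t i r) = Sum.inr (i, r) := by
    rw [Equiv.symm_apply_eq]; rfl
  rw [coef, this]; rfl

theorem idx_cases (hd : ∀ i, 0 < d i) (t : Fin 4) (a : CoefIdx d) :
    (∃ b : Hi d t, a = b.1) ∨ ∃ i r, a = lo hd t i r := by
  obtain ⟨x | x, rfl⟩ := (idx_bij hd t).2 a
  · exact Or.inl ⟨x, rfl⟩
  · exact Or.inr ⟨x.1, x.2, rfl⟩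

theorem map_eval' {S' : Type*} [CommRing S'] (β : S →+* S') (p : Fin 4 → S)
    (F : MvPolynomial (Fin 4) S) : β (eval p F) = eval (fun r => β (p r)) (MvPolynomial.map β F) := by
  rw [eval_map]
  exact (eval₂_comp_left β (RingHom.id S) p F)

theorem coef_nat {S' : Type*} [CommRing S'] (hd : ∀ i, 0 < d i) (β : S →+* S') (p : Fin 4 → S)
    (u : Hi d t → S) (v : Fin 2 → Fin 4 → S) (a : CoefIdx d) :
    β (coef hd p u v a) = coef hd (fun r => β (p r)) (fun a => β (u a)) (fun i r => β (v i r)) a := by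
  obtain ⟨b, rfl⟩ | ⟨i, r, rfl⟩ := idx_cases hd t a
  · rw [coef_hi, coef_hi]
  · rw [coef_lo, coef_lo, lw, lw]
    split_ifs
    · simp only [map_neg, map_add, map_sum, map_mul, map_sub, map_eval', map_hG, ← pderiv_map]
    · simp only [map_sub, map_eval', map_hG, ← pderiv_map]

/-- The evaluation of `C` attached to the parametrisation. -/
noncomputable def Phi (hd : ∀ i, 0 < d i) (κ : k →+* S) (p : Fin 4 → S) (u : Hi d t → S)
    (v : Fin 2 → Fin 4 → S) : Cring k d →+* S :=
  eval₂Hom (eval₂Hom κ (coef hd p u v)) p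

theorem Phi_f (hd : ∀ i, 0 < d i) (κ : k →+* S) (p : Fin 4 → S) (hp : p t = 1) (u : Hi d t → S)
    (v : Fin 2 → Fin 4 → S) (i : Fin 2) : Phi hd κ p u v (genF k d i) = 0 := by
  rw [Phi, ev_genF hd _ p hp]
  simp only [coe_eval₂Hom, eval₂_X, coef_hi, coef_lo]
  rw [← Finset.add_sum_erase _ _ (Finset.mem_univ t), hp]
  have : ∑ s ∈ Finset.univ.erase t, lw p u v i s * p s =
      ∑ s ∈ Finset.univ.erase t, (v i s - eval p (pderiv s (hG u i))) * p s := by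
    refine Finset.sum_congr rfl fun s hs => ?_
    rw [lw, if_neg (Finset.ne_of_mem_erase hs)]
  rw [this, lw, if_pos rfl]
  ring

theorem Phi_d (hd : ∀ i, 0 < d i) (κ : k →+* S) (p : Fin 4 → S) (hp : p t = 1) (u : Hi d t → S)
    (v : Fin 2 → Fin 4 → S) (i : Fin 2) (r : Fin 4) (hr : r ≠ t) :
    Phi hd κ p u v (pderiv r (genF k d i)) = v i r := by
  rw [Phi, ev_pd_genF hd _ p hp _ _ hr]
  simp only [coe_eval₂Hom, eval₂_X, coef_hi, coef_lo]
  rw [lw, if_neg hr]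
  ring

theorem Phi_X (hd : ∀ i, 0 < d i) (κ : k →+* S) (p : Fin 4 → S) (u : Hi d t → S)
    (v : Fin 2 → Fin 4 → S) (r : Fin 4) : Phi hd κ p u v (X r) = p r := by
  simp [Phi]

theorem Phi_C (hd : ∀ i, 0 < d i) (κ : k →+* S) (p : Fin 4 → S) (u : Hi d t → S)
    (v : Fin 2 → Fin 4 → S) (q : Aring k d) :
    Phi hd κ p u v (C q) = eval₂Hom κ (coef hd p u v) q := by
  simp [Phi]

theorem Phi_t (hd : ∀ i, 0 < d i) (κ : k →+* S) (p : Fin 4 → S) (hp : p t = 1) (u : Hi d t → S)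
    (v : Fin 2 → Fin 4 → S) (i : Fin 2) :
    Phi hd κ p u v (pderiv t (genF k d i)) = - ∑ s ∈ Finset.univ.erase t, p s * v i s := by
  have h := congrArg (Phi hd κ p u v) (genF_homog (k := k) (d := d) i).sum_X_mul_pderiv
  rw [map_nsmul, Phi_f hd κ p hp, smul_zero, map_sum,
    ← Finset.add_sum_erase _ _ (Finset.mem_univ t)] at h
  simp only [map_mul, Phi_X, hp, one_mul] at h
  rw [eq_neg_iff_add_eq_zero, ← h]
  congr 1
  refine Finset.sum_congr rfl fun s hs => ?_
  rw [Phi_d hd κ p hp _ _ _ _ (Finset.ne_of_mem_erase hs)]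

theorem coef_unique (hd : ∀ i, 0 < d i) (g : Aring k d →+* S) (p : Fin 4 → S) (hp : p t = 1)
    (hf : ∀ i, eval₂Hom g p (genF k d i) = 0) (a : CoefIdx d) :
    coef hd p (fun a : Hi d t => g (X a.1))
      (fun i r => eval₂Hom g p (pderiv r (genF k d i))) a = g (X a) := by
  obtain ⟨b, rfl⟩ | ⟨i, r, rfl⟩ := idx_cases hd t a
  · rw [coef_hi]
  · have key : ∀ s, s ≠ t → eval₂Hom g p (pderiv s (genF k d i)) -
        eval p (pderiv s (hG (fun a : Hi d t => g (X a.1)) i)) = g (X (lo hd t i s)) := by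
      intro s hs
      rw [ev_pd_genF hd g p hp i s hs]; ring
    rw [coef_lo, lw]
    split_ifs with hr
    · subst hr
      have := hf i
      rw [ev_genF hd g p hp, ← Finset.add_sum_erase _ _ (Finset.mem_univ r), hp] at this
      rw [Finset.sum_congr rfl (fun s hs => by rw [key s (Finset.ne_of_mem_erase hs)])]
      linear_combination (-1 : S) * this
    · exact key r hr

end

end Coef

section Charts

variable {k : Type*} [CommRing k] {d : Fin 2 → ℕ}

/-- Base ring of the chart. -/
abbrev KB (k : Type*) [CommRing k] (d : Fin 2 → ℕ) (t : Fin 4) : Type _ :=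
  MvPolynomial ({r : Fin 4 // r ≠ t} ⊕ Hi d t) k

noncomputable def pB (k : Type*) [CommRing k] (d : Fin 2 → ℕ) (t : Fin 4) (r : Fin 4) : KB k d t :=
  if h : r ≠ t then X (Sum.inl ⟨r, h⟩) else 1

noncomputable def uB (k : Type*) [CommRing k] (d : Fin 2 → ℕ) (t : Fin 4) (a : Hi d t) : KB k d t :=
  X (Sum.inr a)

abbrev SB (k : Type*) [CommRing k] (d : Fin 2 → ℕ) (t : Fin 4) : Type _ :=
  MvPolynomial ({r : Fin 4 // r ≠ t} ⊕ {r : Fin 4 // r ≠ t}) (KB k d t)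

abbrev RB (k : Type*) [CommRing k] (d : Fin 2 → ℕ) (t : Fin 4) : Type _ :=
  MvPolynomial (Option {r : Fin 4 // r ≠ t}) (KB k d t)

noncomputable def vS (k : Type*) [CommRing k] (d : Fin 2 → ℕ) (t : Fin 4) (j i : Fin 2)
    (r : Fin 4) : SB k d t :=
  if h : r ≠ t then (if i = j then X (Sum.inl ⟨r, h⟩) else X (Sum.inr ⟨r, h⟩)) else 0

noncomputable def vR (k : Type*) [CommRing k] (d : Fin 2 → ℕ) (t : Fin 4) (j i : Fin 2)
    (r : Fin 4) : RB k d t :=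
  if h : r ≠ t then (if i = j then X (some ⟨r, h⟩) else X none * X (some ⟨r, h⟩)) else 0

/-- The chart parametrisation of `C`. -/
noncomputable def PhiR (k : Type*) [CommRing k] (hd : ∀ i, 0 < d i) (t : Fin 4) (j : Fin 2) :
    Cring k d →+* RB k d t :=
  Phi hd (C.comp C) (fun r => C (pB k d t r)) (fun a => C (uB k d t a)) (vR k d t j)

/-- The chart parametrisation of `A`. -/
noncomputable def phiR (k : Type*) [CommRing k] (hd : ∀ i, 0 < d i) (t : Fin 4) (j : Fin 2) :
    Aring k d →+* RB k d t :=
  eval₂Hom (C.comp C) (coef hd (fun r => C (pB k d t r)) (fun a => C (uB k d t a)) (vR k d t j))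

noncomputable def chiS (k : Type*) [CommRing k] (hd : ∀ i, 0 < d i) (t : Fin 4) (j : Fin 2) :
    Aring k d →+* SB k d t :=
  eval₂Hom (C.comp C) (coef hd (fun r => C (pB k d t r)) (fun a => C (uB k d t a)) (vS k d t j))

theorem PhiR_C (hd : ∀ i, 0 < d i) (t : Fin 4) (j : Fin 2) (q : Aring k d) :
    PhiR k hd t j (C q) = phiR k hd t j q := Phi_C _ _ _ _ _ _

theorem reesMap_C {K ι : Type*} [CommRing K] (x : K) : reesMap K ι (C x) = C x := by
  simp [reesMap, MvPolynomial.algebraMap_eq]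

theorem reesMap_chiS (hd : ∀ i, 0 < d i) (t : Fin 4) (j : Fin 2) (q : Aring k d) :
    reesMap (KB k d t) {r : Fin 4 // r ≠ t} (chiS k hd t j q) = phiR k hd t j q := by
  have : ((reesMap (KB k d t) {r : Fin 4 // r ≠ t} : SB k d t →+* RB k d t).comp (chiS k hd t j)) =
      phiR k hd t j := by
    apply MvPolynomial.ringHom_ext
    · intro c
      simp [chiS, phiR, MvPolynomial.algHom_C]
    · intro a
      simp only [chiS, phiR, RingHom.comp_apply, coe_eval₂Hom, eval₂_X]
      rw [coef_nat]
      congr 1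
      · funext r; exact reesMap_C _
      · funext r; exact reesMap_C _
      · funext i r
        simp only [vS, vR, RingHom.coe_coe]
        split_ifs
        · simp [reesMap]
        · simp [reesMap]
        · simp
  exact RingHom.congr_fun this q

theorem coef_congr {S : Type*} [CommRing S] {t : Fin 4} (hd : ∀ i, 0 < d i)
    (p : Fin 4 → S) (u : Hi d t → S) (v v' : Fin 2 → Fin 4 → S)
    (hv : ∀ i r, r ≠ t → v i r = v' i r) (a : CoefIdx d) :
    coef hd p u v a = coef hd p u v' a := by
  obtain ⟨b, rfl⟩ | ⟨i, r, rfl⟩ := idx_cases hd t a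
  · rw [coef_hi, coef_hi]
  · rw [coef_lo, coef_lo, lw, lw]
    split_ifs with hr
    · congr 2
      refine Finset.sum_congr rfl fun s hs => ?_
      rw [hv i s (Finset.ne_of_mem_erase hs)]
    · rw [hv i r hr]

theorem Phi_rank {S : Type*} [CommRing S] {t : Fin 4} (hd : ∀ i, 0 < d i) (κ : k →+* S)
    (p : Fin 4 → S) (hp : p t = 1) (u : Hi d t → S)
    (v : Fin 2 → Fin 4 → S) (m : Fin 2 → S) (b : Fin 4 → S) (hv : ∀ i r, v i r = m i * b r) :
    ∃ b' : Fin 4 → S, ∀ i r, Phi hd κ p u v (pderiv r (genF k d i)) = m i * b' r := by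
  refine ⟨fun r => if r = t then - ∑ s ∈ Finset.univ.erase t, p s * b s else b r, ?_⟩
  intro i r
  by_cases h : r = t
  · subst h
    beta_reduce
    rw [Phi_t _ _ _ hp, if_pos rfl, mul_neg, Finset.mul_sum]
    congr 1
    refine Finset.sum_congr rfl fun s hs => ?_
    rw [hv]; ring
  · beta_reduce
    rw [Phi_d _ _ _ hp _ _ _ _ h, if_neg h, hv]

theorem PhiR_pd (hd : ∀ i, 0 < d i) (t : Fin 4) (j : Fin 2) :
    ∃ (m : Fin 2 → RB k d t) (b : Fin 4 → RB k d t), ∀ i r,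
      PhiR k hd t j (pderiv r (genF k d i)) = m i * b r := by
  have hp : (C (pB k d t t) : RB k d t) = 1 := by simp [pB]
  refine ⟨fun i => if i = j then 1 else X none, Phi_rank hd _ _ hp _ _ _
    (fun r => if h : r ≠ t then X (some ⟨r, h⟩) else 0) ?_⟩
  intro i r
  rw [vR]
  split_ifs <;> simp

theorem PhiR_D (hd : ∀ i, 0 < d i) (t : Fin 4) (j : Fin 2) (x : Cring k d) (hx : x ∈ Dideal k d) :
    PhiR k hd t j x = 0 := by
  have hp : (C (pB k d t t) : RB k d t) = 1 := by simp [pB]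
  have : Dideal k d ≤ RingHom.ker (PhiR k hd t j) := by
    rw [Dideal, Ideal.span_le]
    rintro _ ((rfl | rfl) | ⟨r, s, -, rfl⟩)
    · exact Phi_f _ _ _ hp _ _ _
    · exact Phi_f _ _ _ hp _ _ _
    · obtain ⟨m, b, hmb⟩ := PhiR_pd (k := k) hd t j
      simp only [SetLike.mem_coe, RingHom.mem_ker, Jmin, map_sub, map_mul, hmb]
      ring
  exact this hx

theorem ker_of_pow (hd : ∀ i, 0 < d i) (t : Fin 4) (j : Fin 2) [IsDomain k] (q : Aring k d)
    (s : Fin 4) (ν : ℕ) (h : X s ^ ν * C q ∈ Dideal k d) : phiR k hd t j q = 0 := by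
  have h1 := PhiR_D hd t j _ h
  rw [map_mul, map_pow, PhiR_C] at h1
  have h2 : PhiR k hd t j (X s) ≠ 0 := by
    rw [PhiR, Phi_X]
    rw [Ne, C_eq_zero, pB]
    split_ifs
    · exact X_ne_zero _
    · exact one_ne_zero
  exact (mul_eq_zero.1 h1).resolve_left (pow_ne_zero _ h2)

theorem eval₂_homog {Q : Type*} [CommRing Q] {A : Type*} [CommRing A] (g : A →+* Q)
    (x : Fin 4 → Q) (y : Q)
    (F : MvPolynomial (Fin 4) A) (n : ℕ) (hF : F.IsHomogeneous n) :
    eval₂Hom g (fun r => y * x r) F = y ^ n * eval₂Hom g x F := by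
  rw [coe_eval₂Hom, coe_eval₂Hom, eval₂_eq', eval₂_eq', Finset.mul_sum]
  refine Finset.sum_congr rfl fun m hm => ?_
  have h1 : m.degree = n := by
    by_contra hne
    exact mem_support_iff.1 hm (hF.coeff_eq_zero hne)
  simp only [mul_pow, Finset.prod_mul_distrib, Finset.prod_pow_eq_pow_sum]
  rw [← h1, Finsupp.degree_eq_sum]
  ring

theorem pow_of_ker (hd : ∀ i, 0 < d i) (t : Fin 4) (j : Fin 2) (q : Aring k d)
    (h : phiR k hd t j q = 0) : ∃ ν : ℕ, X t ^ ν * C q ∈ Dideal k d := by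
  let xt : Cring k d ⧸ Dideal k d := Ideal.Quotient.mk _ (X t)
  let Q := Localization.Away xt
  let g : Cring k d →+* Q := (algebraMap (Cring k d ⧸ Dideal k d) Q).comp
    (Ideal.Quotient.mk (Dideal k d))
  have hg : ∀ x ∈ Dideal k d, g x = 0 := by
    intro x hx
    simp [g, Ideal.Quotient.eq_zero_iff_mem.2 hx]
  suffices hs : g (C q) = 0 by
    have h1 : algebraMap _ Q (Ideal.Quotient.mk (Dideal k d) (C q)) = 0 := hs
    rw [IsLocalization.map_eq_zero_iff (Submonoid.powers xt)] at h1
    obtain ⟨⟨_, ν, rfl⟩, hm⟩ := h1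
    refine ⟨ν, Ideal.Quotient.eq_zero_iff_mem.1 ?_⟩
    rw [map_mul, map_pow]
    exact hm
  obtain ⟨y, hy⟩ : ∃ y : Q, y * g (X t) = 1 := by
    obtain ⟨y, hy⟩ := (IsLocalization.Away.algebraMap_isUnit (S := Q) xt).exists_left_inv
    exact ⟨y, hy⟩
  let gA : Aring k d →+* Q := g.comp C
  let z : Fin 4 → Q := fun r => y * g (X r)
  have hgx : ∀ x, eval₂Hom gA (fun r => g (X r)) x = g x := by
    intro x
    have : eval₂Hom gA (fun r => g (X r)) = g := by
      apply MvPolynomial.ringHom_ext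
      · intro c; simp [gA]
      · intro c; simp
    rw [this]
  have hf : ∀ i, eval₂Hom gA z (genF k d i) = 0 := by
    intro i
    rw [eval₂_homog gA _ y _ _ (genF_homog i), hgx, hg, mul_zero]
    apply Ideal.subset_span
    left
    fin_cases i
    · exact Or.inl rfl
    · exact Or.inr rfl
  have hv : ∀ i r, eval₂Hom gA z (pderiv r (genF k d i)) =
      y ^ (d i - 1) * g (pderiv r (genF k d i)) := by
    intro i r
    rw [eval₂_homog gA _ y _ _ (genF_homog i).pderiv, hgx]
  have hJ0 : ∀ r s, r < s → g (pderiv r (genF k d 0)) * g (pderiv s (genF k d 1)) =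
      g (pderiv s (genF k d 0)) * g (pderiv r (genF k d 1)) := by
    intro r s hrs
    have := hg (Jmin k d r s) (Ideal.subset_span (Or.inr ⟨r, s, hrs, rfl⟩))
    rw [Jmin, map_sub, map_mul, map_mul] at this
    exact sub_eq_zero.1 this
  have hJ1 : ∀ r s, g (pderiv r (genF k d 0)) * g (pderiv s (genF k d 1)) =
      g (pderiv s (genF k d 0)) * g (pderiv r (genF k d 1)) := by
    intro r s
    rcases lt_trichotomy r s with h | h | h
    · exact hJ0 r s h
    · rw [h]
    · exact (hJ0 s r h).symm
  have hJ : ∀ r s, g (pderiv r (genF k d j)) * g (pderiv s (genF k d (1 - j))) =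
      g (pderiv s (genF k d j)) * g (pderiv r (genF k d (1 - j))) := by
    intro r s
    have : j = 0 ∨ j = 1 := by omega
    rcases this with rfl | rfl
    · exact hJ1 r s
    · have := hJ1 r s
      rw [sub_self, mul_comm, ← this, mul_comm]
  let V : Fin 2 → Fin 4 → Q := fun i r => eval₂Hom gA z (pderiv r (genF k d i))
  let β0 : KB k d t →+* Q := eval₂Hom (gA.comp C) (Sum.elim (fun r => z r.1) (fun a => gA (X a.1)))
  let β : SB k d t →+* Q := eval₂Hom β0 (Sum.elim (fun r => V j r.1) (fun r => V (1 - j) r.1))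
  have hβ : ∀ x ∈ reesIdeal (KB k d t) {r : Fin 4 // r ≠ t}, β x = 0 := by
    have : reesIdeal (KB k d t) {r : Fin 4 // r ≠ t} ≤ RingHom.ker β := by
      rw [reesIdeal, Ideal.span_le]
      rintro _ ⟨r, s, rfl⟩
      simp only [SetLike.mem_coe, RingHom.mem_ker, map_sub, map_mul, β, coe_eval₂Hom, eval₂_X,
        Sum.elim_inl, Sum.elim_inr]
      simp only [V, hv]
      linear_combination y ^ (d j - 1) * y ^ (d (1 - j) - 1) * hJ r s
    exact fun x hx => this hx
  have hz : z t = 1 := hy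
  have hfin : β.comp (chiS k hd t j) = gA := by
    apply MvPolynomial.ringHom_ext
    · intro c
      simp [chiS, β, β0]
    · intro a
      rw [← coef_unique hd gA z hz hf a]
      simp only [chiS, RingHom.comp_apply, coe_eval₂Hom, eval₂_X]
      rw [coef_nat]
      have e1 : (fun r => β (C (pB k d t r))) = z := by
        funext r
        simp only [β, β0, pB, coe_eval₂Hom, eval₂_C]
        split_ifs with hr
        · simp
        · rw [not_not] at hr; subst hr; simp [hz]
      have e2 : (fun a => β (C (uB k d t a))) = fun a : Hi d t => gA (X a.1) := by
        funext a
        simp [β, β0, uB]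
      rw [e1, e2]
      -- the values at `r = t` are irrelevant
      have e3 : ∀ i r, r ≠ t → β (vS k d t j i r) = V i r := by
        intro i r hr
        simp only [vS, ne_eq, hr, not_false_iff, dif_pos]
        split_ifs with hij
        · subst hij; simp [β]
        · have : i = 1 - j := by omega
          subst this; simp [β]
      exact coef_congr hd _ _ _ _ e3 a
  have h1 : chiS k hd t j q ∈ reesIdeal (KB k d t) {r : Fin 4 // r ≠ t} := by
    apply rees_ker
    rw [reesMap_chiS, h]
  have h2 := hβ _ h1
  rw [← RingHom.comp_apply, hfin] at h2
  exact h2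

theorem comap_eq_ker [IsDomain k] (hd : ∀ i, 0 < d i) (t : Fin 4) (j : Fin 2)
    (T : Ideal (Cring k d))
    (hT : (T : Set (Cring k d)) =
      {p : Cring k d | ∃ ν : ℕ, ∀ q ∈ (mIdeal k d) ^ ν, q * p ∈ Dideal k d}) :
    T.comap (algebraMap (Aring k d) (Cring k d)) = RingHom.ker (phiR k hd t j) := by
  ext q
  rw [Ideal.mem_comap, RingHom.mem_ker, ← SetLike.mem_coe, hT, MvPolynomial.algebraMap_eq,
    Set.mem_ofPred]
  constructor
  · rintro ⟨ν, h⟩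
    have hx : (X t : Cring k d) ∈ mIdeal k d := Ideal.subset_span ⟨t, rfl⟩
    exact ker_of_pow hd t j q t ν (h _ (Ideal.pow_mem_pow hx _))
  · intro h
    have hall : ∀ s, ∃ ν : ℕ, X s ^ ν * C q ∈ Dideal k d := by
      intro s
      obtain ⟨ν, hν⟩ := pow_of_ker hd t j q h
      exact pow_of_ker hd s j q (ker_of_pow hd s j q t ν hν)
    let J : Ideal (Cring k d) := (Dideal k d).colon {C q}
    have hJ : ∀ x, x ∈ J ↔ x * C q ∈ Dideal k d := by
      intro x
      simp [J, Submodule.mem_colon_singleton]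
    have hrad : mIdeal k d ≤ J.radical := by
      rw [mIdeal, Ideal.span_le]
      rintro _ ⟨s, rfl⟩
      obtain ⟨ν, hν⟩ := hall s
      exact ⟨ν, (hJ _).2 hν⟩
    have hfg : (mIdeal k d).FG := by
      exact Submodule.fg_span (Set.finite_range _)
    obtain ⟨n, hn⟩ := Ideal.exists_pow_le_of_le_radical_of_fg hrad hfg
    exact ⟨n, fun x hx => (hJ x).1 (hn hx)⟩

end Charts

section Independence

variable {d : Fin 2 → ℕ} {t : Fin 4} {S : Type*} [CommRing S]

theorem prod_mem_pow (I : Ideal S) (p : Fin 4 → S) (hp : ∀ r, r ≠ t → p r ∈ I) (β : Fin 4 →₀ ℕ)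
    (n : ℕ) (hn : n + β t ≤ ∑ r, β r) : ∏ r, p r ^ β r ∈ I ^ n := by
  rw [← Finset.mul_prod_erase _ _ (Finset.mem_univ t)]
  apply Ideal.mul_mem_left
  have h1 : ∏ r ∈ Finset.univ.erase t, p r ^ β r ∈ ∏ r ∈ Finset.univ.erase t, I ^ β r :=
    Ideal.prod_mem_prod fun r hr => Ideal.pow_mem_pow (hp r (Finset.ne_of_mem_erase hr)) _
  rw [Finset.prod_pow_eq_pow_sum] at h1
  refine Ideal.pow_le_pow_right ?_ h1
  rw [← Finset.add_sum_erase _ _ (Finset.mem_univ t)] at hn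
  omega

theorem hG_mem (I : Ideal S) (p : Fin 4 → S) (hp : ∀ r, r ≠ t → p r ∈ I) (u : Hi d t → S)
    (i : Fin 2) : eval p (hG u i) ∈ I ^ 2 := by
  rw [hG, map_sum]
  refine Ideal.sum_mem _ fun α _ => ?_
  split_ifs with h
  · rw [eval_monomial, Finsupp.prod_fintype _ _ (by simp)]
    apply Ideal.mul_mem_left
    apply prod_mem_pow I p hp
    have := (Finset.mem_finsuppAntidiag'.mp α.2).1
    rw [fs_sum] at this
    omega
  · simp

theorem hG_pd_mem (I : Ideal S) (p : Fin 4 → S) (hp : ∀ r, r ≠ t → p r ∈ I) (u : Hi d t → S)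
    (i : Fin 2) (hu : ∀ a, a.1.1 = i → u a ∈ I) (r : Fin 4) (hr : r ≠ t) :
    eval p (pderiv r (hG u i)) ∈ I ^ 2 := by
  rw [hG, map_sum, map_sum]
  refine Ideal.sum_mem _ fun α _ => ?_
  split_ifs with h
  · rw [pderiv_monomial, eval_monomial, Finsupp.prod_fintype _ _ (by simp)]
    rw [pow_two]
    refine Ideal.mul_mem_mul (Ideal.mul_mem_right _ _ (hu _ rfl)) ?_
    have hs := (Finset.mem_finsuppAntidiag'.mp α.2).1
    rw [fs_sum] at hs
    have := prod_mem_pow I p hp (α.1 - Finsupp.single r 1) 1 (by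
      have h1 : ∑ s, α.1 s ≤ ∑ s, (α.1 - Finsupp.single r 1 : Fin 4 →₀ ℕ) s + 1 := by
        have : ∑ s, α.1 s ≤ ∑ s, ((α.1 - Finsupp.single r 1 : Fin 4 →₀ ℕ) s + Finsupp.single r 1 s) := by
          refine Finset.sum_le_sum fun s _ => ?_
          rw [Finsupp.tsub_apply]; omega
        rw [Finset.sum_add_distrib] at this
        simpa [Finsupp.single_apply] using this
      have h2 : (α.1 - Finsupp.single r 1 : Fin 4 →₀ ℕ) t = α.1 t := by
        rw [Finsupp.tsub_apply, Finsupp.single_apply, if_neg hr]; rfl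
      omega)
    simpa using this
  · simp

theorem hG_add (u u' : Hi d t → S) (i : Fin 2) :
    hG (fun a => u a + u' a) i = hG u i + hG u' i := by
  rw [hG, hG, hG, ← Finset.sum_add_distrib]
  refine Finset.sum_congr rfl fun α _ => ?_
  split_ifs <;> simp

open Classical in
theorem hG_single (i : Fin 2) (α : Fin 4 →₀ ℕ) (hα : (α.sum fun _ e => e) = d i)
    (h : α t + 2 ≤ d i) :
    hG (fun a : Hi d t => if a.1 = (⟨i, ⟨α, hα⟩⟩ : CoefIdx d) then (1 : S) else 0) i =
      monomial α 1 := by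
  rw [hG, Finset.sum_eq_single ⟨α, Finset.mem_finsuppAntidiag'.mpr ⟨hα, by simp⟩⟩]
  · rw [dif_pos h, if_pos rfl]
  · intro β _ hβ
    split_ifs with h1 h2
    · exfalso
      apply hβ
      have h3 := eq_of_heq (Sigma.mk.inj h2).2
      have h4 : β.1 = α := Subtype.mk.inj h3
      exact Subtype.ext h4
    · simp
    · rfl
  · intro hn; exact absurd (Finset.mem_attach _ _) hn

/-- exponent of the nodal term -/
noncomputable def aS (n : ℕ) : Fin 4 →₀ ℕ :=
  Finsupp.single 0 (n - 2) + Finsupp.single 2 1 + Finsupp.single 3 1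

theorem aS_sum (n : ℕ) (hn : 2 ≤ n) : ((aS n).sum fun _ e => e) = n := by
  rw [fs_sum, aS]
  simp only [Finsupp.add_apply, Finset.sum_add_distrib, Finsupp.single_apply, Finset.sum_ite_eq,
    Finset.mem_univ, if_true]
  omega

theorem aS_zero (n : ℕ) (hn : 2 ≤ n) : aS n 0 + 2 ≤ n := by
  simp [aS, Finsupp.single_apply]
  omega

noncomputable def aStar (i : Fin 2) (hi : 2 ≤ d i) : CoefIdx d := ⟨i, ⟨aS (d i), aS_sum _ hi⟩⟩

theorem aS_pd (n : ℕ) (p : Fin 4 → S) (hp : p 0 = 1) :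
    eval p (pderiv 1 (monomial (aS n) (1 : S))) = 0 ∧
    eval p (pderiv 2 (monomial (aS n) (1 : S))) = p 3 ∧
    eval p (pderiv 3 (monomial (aS n) (1 : S))) = p 2 := by
  have : (monomial (aS n) (1 : S) : MvPolynomial (Fin 4) S) = X 0 ^ (n - 2) * X 2 * X 3 := by
    rw [aS, X_pow_eq_monomial, X, X, monomial_mul, monomial_mul]; simp
  rw [this]
  simp [pderiv_mul, pderiv_pow, pderiv_X, hp, Pi.single_apply]

noncomputable def dp (hd : ∀ i, 0 < d i) (j i : Fin 2) (x : CoefIdx d → S) (r : Fin 4) : S :=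
  ![1, - x (lo hd 0 j 0), - x (lo hd 0 i 3), - x (lo hd 0 i 2)] r

open Classical in
noncomputable def du (i : Fin 2) (hi : 2 ≤ d i) (x : CoefIdx d → S) (a : Hi d 0) : S :=
  x a.1 + if a.1 = aStar i hi then 1 else 0

noncomputable def db (hd : ∀ i, 0 < d i) (j : Fin 2) (x : CoefIdx d → S) (r : Fin 4) : S :=
  x (lo hd 0 j r) + if r = 1 then 1 else 0

noncomputable def dv (hd : ∀ i, 0 < d i) (j i : Fin 2) (x : CoefIdx d → S) (l : Fin 2)
    (r : Fin 4) : S :=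
  if l = j then db hd j x r else x (lo hd 0 i 1) * db hd j x r

open Classical in
noncomputable def dc (S : Type*) [CommRing S] (hd : ∀ i, 0 < d i) (j i : Fin 2) (hi : 2 ≤ d i)
    (a : CoefIdx d) : S :=
  (if a = aStar i hi then 1 else 0) + (if a = lo hd 0 j 1 then 1 else 0)

theorem coef_data (hd : ∀ i, 0 < d i) (j i : Fin 2) (hij : i ≠ j) (hi : 2 ≤ d i) (I : Ideal S)
    (x : CoefIdx d → S) (hx : ∀ a, x a ∈ I) (a : CoefIdx d) (ha : a ≠ lo hd 0 i 0) :
    coef hd (dp hd j i x) (du i hi x) (dv hd j i x) a - x a - dc S hd j i hi a ∈ I ^ 2 := by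
  classical
  have hp0 : dp hd j i x 0 = 1 := rfl
  have hp1 : dp hd j i x 1 = - x (lo hd 0 j 0) := rfl
  have hp2 : dp hd j i x 2 = - x (lo hd 0 i 3) := rfl
  have hp3 : dp hd j i x 3 = - x (lo hd 0 i 2) := rfl
  have hp : ∀ r, r ≠ 0 → dp hd j i x r ∈ I := by
    intro r hr
    have : r = 1 ∨ r = 2 ∨ r = 3 := by omega
    rcases this with rfl | rfl | rfl
    · rw [hp1]; exact I.neg_mem (hx _)
    · rw [hp2]; exact I.neg_mem (hx _)
    · rw [hp3]; exact I.neg_mem (hx _)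
  have hmul : ∀ {y z : S}, y ∈ I → z ∈ I → y * z ∈ I ^ 2 := by
    intro y z hy hz; rw [pow_two]; exact Ideal.mul_mem_mul hy hz
  have h2I : ∀ {y : S}, y ∈ I ^ 2 → y ∈ I := fun h => Ideal.pow_le_self two_ne_zero h
  have hE : ∀ r, r ≠ 0 → eval (dp hd j i x) (pderiv r (hG (du i hi x) j)) ∈ I ^ 2 := by
    intro r hr
    refine hG_pd_mem I _ hp _ _ ?_ r hr
    intro a ha
    rw [du, if_neg, add_zero]
    · exact hx _
    · intro h
      apply hij
      rw [← ha, h]; rfl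
  have hG' : hG (du i hi x) i = hG (fun a : Hi d 0 => x a.1) i + monomial (aS (d i)) 1 := by
    rw [← hG_single (t := 0) i (aS (d i)) (aS_sum _ hi) (aS_zero _ hi), ← hG_add]
    rfl
  have hE' : ∀ r, r ≠ 0 → eval (dp hd j i x) (pderiv r (hG (fun a : Hi d 0 => x a.1) i)) ∈ I ^ 2 :=
    fun r hr => hG_pd_mem I _ hp _ _ (fun a _ => hx _) r hr
  have hH := hG_mem I _ hp (du i hi x) j
  obtain ⟨q1, q2, q3⟩ := aS_pd (d i) (dp hd j i x) hp0
  have hstar : ∀ l r, lo hd 0 l r ≠ aStar i hi := by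
    intro l r h
    have := lo_notHi hd 0 l r
    rw [h] at this
    exact this (aS_zero _ hi)
  obtain ⟨b, rfl⟩ | ⟨l, r, rfl⟩ := idx_cases hd 0 a
  · have hb : b.1 ≠ lo hd 0 j 1 := by
      intro h
      have h2 := b.2
      rw [h] at h2
      exact lo_notHi hd 0 j 1 h2
    rw [coef_hi, du, dc, if_neg hb]
    simp
  · rw [coef_lo, dc, if_neg (hstar l r), zero_add]
    by_cases hl : l = j
    · subst hl
      have hdc : (if lo hd 0 l r = lo hd 0 l 1 then (1 : S) else 0) = if r = 1 then 1 else 0 := by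
        by_cases hr : r = 1
        · rw [hr]; simp
        · rw [if_neg hr, if_neg]; intro h; exact hr (lo_inj hd 0 h).2
      rw [hdc]
      by_cases hr : r = 0
      · subst hr
        have hset : (Finset.univ.erase (0 : Fin 4)) = {1, 2, 3} := by decide
        rw [lw, if_pos rfl, hset, Finset.sum_insert (by decide), Finset.sum_pair (by decide)]
        simp only [dv, if_true, db, hp1, hp2, hp3]
        rw [if_neg (by decide : ¬ (0 : Fin 4) = 1), if_neg (by decide : ¬ (2 : Fin 4) = 1),
          if_neg (by decide : ¬ (3 : Fin 4) = 1)]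
        have e1 := hmul (I.sub_mem (hx (lo hd 0 l 1)) (h2I (hE 1 (by decide)))) (hx (lo hd 0 l 0))
        have e2 := hmul (I.sub_mem (hx (lo hd 0 l 2)) (h2I (hE 2 (by decide)))) (hx (lo hd 0 i 3))
        have e3 := hmul (I.sub_mem (hx (lo hd 0 l 3)) (h2I (hE 3 (by decide)))) (hx (lo hd 0 i 2))
        have := (I ^ 2).add_mem ((I ^ 2).add_mem ((I ^ 2).add_mem ((I ^ 2).neg_mem hH) e1) e2) e3
        convert this using 1
        ring
      · rw [lw, if_neg hr, dv, if_pos rfl, db]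
        have := (I ^ 2).neg_mem (hE r hr)
        convert this using 1
        ring
    · have hl' : l = i := by omega
      subst hl'
      have hr : r ≠ 0 := by rintro rfl; exact ha rfl
      rw [if_neg (by intro h; exact hl (lo_inj hd 0 h).1), lw, if_neg hr, dv, if_neg hl, hG',
        map_add, map_add, db]
      have h3 : r = 1 ∨ r = 2 ∨ r = 3 := by omega
      have e1 := (I ^ 2).sub_mem (hmul (hx (lo hd 0 l 1)) (hx (lo hd 0 j r))) (hE' r hr)
      rcases h3 with rfl | rfl | rfl
      · rw [q1]
        convert e1 using 1
        simp; ring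
      · rw [q2, hp3]
        convert e1 using 1
        simp; ring
      · rw [q3, hp2]
        convert e1 using 1
        simp; ring

end Independence

section Final

variable {k : Type*} [CommRing k] {d : Fin 2 → ℕ}

instance (d : Fin 2 → ℕ) : Finite (CoefIdx d) := by
  have : ∀ i, Finite {α : Fin 4 →₀ ℕ // (α.sum fun _ e => e) = d i} := by
    intro i
    refine Finite.of_injective (β := (Finset.finsuppAntidiag (Finset.univ : Finset (Fin 4)) (d i)))
      (fun α => ⟨α.1, Finset.mem_finsuppAntidiag'.mpr ⟨α.2, by simp⟩⟩) ?_
    intro a b h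
    have h' : a.1 = b.1 := Subtype.mk.inj h
    exact Subtype.ext h'
  unfold CoefIdx
  infer_instance

theorem ker_ne_bot [IsDomain k] (hd : ∀ i, 0 < d i) (t : Fin 4) (j : Fin 2) :
    RingHom.ker (phiR k hd t j) ≠ ⊥ := by
  intro h
  have hinj : Function.Injective (phiR k hd t j) := (RingHom.injective_iff_ker_eq_bot _).2 h
  let f : Aring k d →ₐ[k] RB k d t := { phiR k hd t j with commutes' := fun c => eval₂Hom_C _ _ c }
  have hf : Function.Injective f := hinj
  let e := (MvPolynomial.sumAlgEquiv k (Option {r : Fin 4 // r ≠ t})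
    ({r : Fin 4 // r ≠ t} ⊕ Hi d t)).symm
  have h2 : Function.Injective (e.toAlgHom.comp f) := e.injective.comp hf
  have h3 := _root_.trdeg_le_of_injective _ h2
  rw [MvPolynomial.trdeg_of_isDomain, MvPolynomial.trdeg_of_isDomain, Cardinal.lift_le,
    ← Cardinal.mk_congr (idxE hd t)] at h3
  have : Fintype (Hi d t) := Fintype.ofFinite _
  rw [Cardinal.mk_fintype, Cardinal.mk_fintype, Nat.cast_le] at h3
  simp [Fintype.card_subtype_compl] at h3
  omega

theorem ker_sub_inj (hd : ∀ i, 0 < d i) (j i : Fin 2) (hij : i ≠ j) (hi : 2 ≤ d i)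
    (b : MvPolynomial {a : CoefIdx d // a ≠ lo hd 0 i 0} k)
    (hb : phiR k hd 0 j (rename Subtype.val b) = 0) : b = 0 := by
  classical
  let Asub := MvPolynomial {a : CoefIdx d // a ≠ lo hd 0 i 0} k
  let x : CoefIdx d → Asub := fun a => if h : a ≠ lo hd 0 i 0 then X ⟨a, h⟩ else 0
  let I : Ideal Asub := idealOfVars _ k
  have hx : ∀ a, x a ∈ I := by
    intro a
    simp only [x]
    split_ifs
    · exact Ideal.subset_span ⟨_, rfl⟩
    · exact I.zero_mem
  let cf := coef hd (dp hd j i x) (du i hi x) (dv hd j i x)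
  let th0 : KB k d 0 →+* Asub := eval₂Hom C (Sum.elim (fun r => dp hd j i x r.1) (du i hi x))
  let th : RB k d 0 →+* Asub := eval₂Hom th0
    (fun o => o.elim (x (lo hd 0 i 1)) (fun r => db hd j x r.1))
  have hth : th.comp (phiR k hd 0 j) = eval₂Hom C cf := by
    apply MvPolynomial.ringHom_ext
    · intro c
      simp [phiR, th, th0]
    · intro a
      simp only [phiR, RingHom.comp_apply, coe_eval₂Hom, eval₂_X, cf]
      rw [coef_nat]
      have e1 : (fun r => th (C (pB k d 0 r))) = dp hd j i x := by
        funext r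
        simp only [th, th0, pB, coe_eval₂Hom, eval₂_C]
        split_ifs with hr
        · simp
        · rw [not_not] at hr; subst hr; simp [dp]
      have e2 : (fun a => th (C (uB k d 0 a))) = du i hi x := by
        funext a
        simp [th, th0, uB]
      rw [e1, e2]
      refine coef_congr hd _ _ _ _ ?_ a
      intro l r hr
      simp only [vR, ne_eq, hr, not_false_iff, dif_pos, dv]
      split_ifs with hl
      · simp [th]
      · simp [th]
  let c : {a : CoefIdx d // a ≠ lo hd 0 i 0} → k := fun a => dc k hd j i hi a.1
  have hinj := aux_inj' (k := k) (fun a : {a : CoefIdx d // a ≠ lo hd 0 i 0} => cf a.1) c (by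
    intro a
    have := coef_data hd j i hij hi I x hx a.1 a.2
    have h1 : x a.1 = X a := by simp only [x]; rw [dif_pos a.2]
    have h2 : (C (c a) : Asub) = dc Asub hd j i hi a.1 := by
      simp only [c, dc, map_add]
      congr 1
      · split_ifs <;> simp
      · split_ifs <;> simp
    rw [h1, ← h2] at this
    exact this)
  apply hinj
  rw [map_zero]
  have h1 : th (phiR k hd 0 j (rename Subtype.val b)) = 0 := by rw [hb, map_zero]
  rw [← RingHom.comp_apply, hth, coe_eval₂Hom, eval₂_rename] at h1
  exact h1

theorem final_aux [IsDomain k] [UniqueFactorizationMonoid k] (hd : ∀ i, 0 < d i) (j i : Fin 2)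
    (hij : i ≠ j) (hi : 2 ≤ d i) :
    ∃ P : Aring k d, Irreducible P ∧ RingHom.ker (phiR k hd 0 j) = Ideal.span {P} := by
  classical
  let a0 := lo hd 0 i 0
  let Asub := MvPolynomial {a : CoefIdx d // a ≠ a0} k
  let eA : Polynomial Asub ≃+* Aring k d := ((optionEquivLeft k {a : CoefIdx d // a ≠ a0}).symm.trans
    (renameEquiv k (Equiv.optionSubtypeNe a0))).toRingEquiv
  have heA : ∀ b : Asub, eA (Polynomial.C b) = rename Subtype.val b := by
    intro b
    have h1 : (optionEquivLeft k {a : CoefIdx d // a ≠ a0}) (rename some b) = Polynomial.C b := by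
      induction b using MvPolynomial.induction_on with
      | C a => simp
      | add p q hp hq => simp [hp, hq]
      | mul_X p n hp => simp [hp]
    have h2 : (optionEquivLeft k {a : CoefIdx d // a ≠ a0}).symm (Polynomial.C b) = rename some b := by
      rw [← h1, AlgEquiv.symm_apply_apply]
    change renameEquiv k (Equiv.optionSubtypeNe a0)
      ((optionEquivLeft k {a : CoefIdx d // a ≠ a0}).symm (Polynomial.C b)) = _
    rw [h2, renameEquiv_apply, rename_rename]
    congr 2
  let q : Ideal (Polynomial Asub) := (RingHom.ker (phiR k hd 0 j)).comap (eA : Polynomial Asub →+* Aring k d)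
  have hker : (RingHom.ker (phiR k hd 0 j)).IsPrime := RingHom.ker_isPrime _
  have hq : q.IsPrime := Ideal.IsPrime.comap _
  have hq0 : q ≠ ⊥ := by
    intro h
    apply ker_ne_bot (k := k) hd 0 j
    rw [eq_bot_iff]
    intro y hy
    have : eA.symm y ∈ q := by
      simp only [q, Ideal.mem_comap, RingHom.coe_coe, RingEquiv.apply_symm_apply]
      exact hy
    rw [h, Ideal.mem_bot] at this
    simpa using this
  obtain ⟨P, hP, hqP⟩ := aux_principal q hq0 (by
    intro b hb
    apply ker_sub_inj hd j i hij hi b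
    have : phiR k hd 0 j (eA (Polynomial.C b)) = 0 := hb
    rwa [heA] at this)
  refine ⟨eA P, (MulEquiv.irreducible_iff eA).2 hP, ?_⟩
  ext y
  have h1 : y ∈ RingHom.ker (phiR k hd 0 j) ↔ eA.symm y ∈ q := by
    simp only [q, Ideal.mem_comap, RingHom.coe_coe, RingEquiv.apply_symm_apply]
  rw [h1, hqP, Ideal.mem_span_singleton, Ideal.mem_span_singleton,
    ← map_dvd_iff eA, RingEquiv.apply_symm_apply]

end Final

/-- **Theorem.** If `k` is a UFD and `d₁ + d₂ ≥ 3`, then the defining ideal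
`𝔓 = T_𝔪(𝒟) ∩ A` of the discriminant scheme of the generic complete intersection curve of
bidegree `(d₁,d₂)` in `ℙ³` is a principal ideal of `A` generated by an irreducible element. -/
theorem discriminant_ideal_principal_irreducible (k : Type*) [CommRing k] [IsDomain k]
    [UniqueFactorizationMonoid k] (d : Fin 2 → ℕ)
    (hd : ∀ i, 0 < d i) (hdeg : 3 ≤ d 0 + d 1) (T : Ideal (Cring k d))
    (hT : (T : Set (Cring k d)) =
      {p : Cring k d | ∃ ν : ℕ, ∀ q ∈ (mIdeal k d) ^ ν, q * p ∈ Dideal k d}) :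
    ∃ P : Aring k d, Irreducible P ∧
      T.comap (algebraMap (Aring k d) (Cring k d)) = Ideal.span {P} := by
  have h : 2 ≤ d 1 ∨ 2 ≤ d 0 := by
    have := hd 0; have := hd 1; omega
  rcases h with h | h
  · rw [comap_eq_ker hd 0 0 T hT]
    exact final_aux hd 0 1 (by decide) h
  · rw [comap_eq_ker hd 0 1 T hT]
    exact final_aux hd 1 0 (by decide) h
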